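/- Let ρ_ABC be a density matrix (positive semidefinite with trace 1) on the tensor product of finite-dimensional complex Hilbert spaces H_A ⊗ H_B ⊗ H_C. Then for every α ∈ (0,1), Tr{ ( ρ_AC^{(1−α)/2} ρ_C^{(α−1)/2} ρ_BC^{1−α} ρ_C^{(α−1)/2} ρ_AC^{(1−α)/2} )^{1/(1−α)} } ≤ 1. -/

import Mathlib

open scoped ComplexOrder Matrix

/-- Real power of a Hermitian matrix, taken on its support:
for `A = ∑ᵢ λᵢ |i⟩⟨i|`, `mpow A t = ∑_{i : λᵢ ≠ 0} λᵢ^t |i⟩⟨i|`.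
(For non-Hermitian input we return the junk value `0`.) -/
noncomputable def mpow {n : Type*} [Fintype n] [DecidableEq n]
    (A : Matrix n n ℂ) (t : ℝ) : Matrix n n ℂ :=
  if h : A.IsHermitian then
    (h.eigenvectorUnitary : Matrix n n ℂ) *
      Matrix.diagonal (fun i => ((if h.eigenvalues i = 0 then (0:ℝ)
        else (h.eigenvalues i) ^ t) : ℂ)) *
      (star h.eigenvectorUnitary : Matrix n n ℂ)
  else 0

/-- The reduced matrix `ρ_AC` of a tripartite matrix, viewed as the operator
`ρ_AC ⊗ I_B` on the full space. -/
noncomputable def redAC {dA dB dC : ℕ}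
    (ρ : Matrix (Fin dA × Fin dB × Fin dC) (Fin dA × Fin dB × Fin dC) ℂ) :
    Matrix (Fin dA × Fin dB × Fin dC) (Fin dA × Fin dB × Fin dC) ℂ :=
  fun x y => (if x.2.1 = y.2.1 then (1:ℂ) else 0) *
    ∑ m : Fin dB, ρ (x.1, m, x.2.2) (y.1, m, y.2.2)

/-- The reduced matrix `ρ_BC` of a tripartite matrix, viewed as the operator
`I_A ⊗ ρ_BC` on the full space. -/
noncomputable def redBC {dA dB dC : ℕ}
    (ρ : Matrix (Fin dA × Fin dB × Fin dC) (Fin dA × Fin dB × Fin dC) ℂ) :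
    Matrix (Fin dA × Fin dB × Fin dC) (Fin dA × Fin dB × Fin dC) ℂ :=
  fun x y => (if x.1 = y.1 then (1:ℂ) else 0) * ∑ m : Fin dA, ρ (m, x.2) (m, y.2)

/-- The reduced matrix `ρ_C` of a tripartite matrix, viewed as the operator
`I_A ⊗ I_B ⊗ ρ_C` on the full space. -/
noncomputable def redC {dA dB dC : ℕ}
    (ρ : Matrix (Fin dA × Fin dB × Fin dC) (Fin dA × Fin dB × Fin dC) ℂ) :
    Matrix (Fin dA × Fin dB × Fin dC) (Fin dA × Fin dB × Fin dC) ℂ :=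
  fun x y => (if x.1 = y.1 then (1:ℂ) else 0) * (if x.2.1 = y.2.1 then (1:ℂ) else 0) *
    ∑ m : Fin dA, ∑ l : Fin dB, ρ (m, l, x.2.2) (m, l, y.2.2)

open scoped Kronecker

/-- functional calculus of a Hermitian matrix -/
noncomputable def fc {n : Type*} [Fintype n] [DecidableEq n] {A : Matrix n n ℂ}
    (h : A.IsHermitian) (f : ℝ → ℂ) : Matrix n n ℂ :=
  (h.eigenvectorUnitary : Matrix n n ℂ) * Matrix.diagonal (fun i => f (h.eigenvalues i)) *
      (star h.eigenvectorUnitary : Matrix n n ℂ)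

/-- complex power on the support -/
noncomputable def pw (z : ℂ) (x : ℝ) : ℂ := if x = 0 then 0 else (x : ℂ) ^ z

/-- squared Frobenius norm -/
noncomputable def fr {m n : Type*} [Fintype m] [Fintype n] (X : Matrix m n ℂ) : ℝ :=
  ∑ i, ∑ j, ‖X i j‖ ^ 2

section gen
set_option linter.unusedSectionVars false
set_option linter.unusedVariables false
variable {n : Type*} [Fintype n] [DecidableEq n]

lemma fc_congr {A : Matrix n n ℂ} (h : A.IsHermitian) {f g : ℝ → ℂ}
    (hfg : ∀ i, f (h.eigenvalues i) = g (h.eigenvalues i)) : fc h f = fc h g := by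
  simp [fc, hfg]

lemma fc_mul {A : Matrix n n ℂ} (h : A.IsHermitian) (f g : ℝ → ℂ) :
    fc h f * fc h g = fc h (fun x => f x * g x) := by
  have hU : (star h.eigenvectorUnitary : Matrix n n ℂ) * (h.eigenvectorUnitary : Matrix n n ℂ) = 1 := by
    simp
  calc fc h f * fc h g = (h.eigenvectorUnitary : Matrix n n ℂ) *
        Matrix.diagonal (fun i => f (h.eigenvalues i)) *
      ((star h.eigenvectorUnitary : Matrix n n ℂ) * (h.eigenvectorUnitary : Matrix n n ℂ)) *
      Matrix.diagonal (fun i => g (h.eigenvalues i)) * (star h.eigenvectorUnitary : Matrix n n ℂ) := by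
        simp only [fc, Matrix.mul_assoc]
    _ = _ := by
        rw [hU, Matrix.mul_one, Matrix.mul_assoc _ (Matrix.diagonal _) (Matrix.diagonal _),
          Matrix.diagonal_mul_diagonal]; rfl

lemma fc_star {A : Matrix n n ℂ} (h : A.IsHermitian) (f : ℝ → ℂ) :
    (fc h f)ᴴ = fc h (fun x => star (f x)) := by
  simp only [fc, Matrix.conjTranspose_mul, Matrix.diagonal_conjTranspose, Matrix.mul_assoc,
    Matrix.star_eq_conjTranspose, Matrix.conjTranspose_conjTranspose]
  rfl

lemma fc_id {A : Matrix n n ℂ} (h : A.IsHermitian) : fc h (fun x => (x : ℂ)) = A := by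
  conv_rhs => rw [h.spectral_theorem]
  simp [fc, Unitary.conjStarAlgAut_apply]
  rfl

lemma fc_trace {A : Matrix n n ℂ} (h : A.IsHermitian) (f : ℝ → ℂ) :
    (fc h f).trace = ∑ i, f (h.eigenvalues i) := by
  rw [fc, Matrix.trace_mul_cycle]
  simp [Matrix.trace]

lemma fc_unique {A W : Matrix n n ℂ} (h : A.IsHermitian) (f : ℝ → ℂ) (μ : n → ℝ)
    (hW : W * Wᴴ = 1) (hW' : Wᴴ * W = 1)
    (hA : A = W * Matrix.diagonal (fun i => (μ i : ℂ)) * Wᴴ) :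
    fc h f = W * Matrix.diagonal (fun i => f (μ i)) * Wᴴ := by
  set U := (h.eigenvectorUnitary : Matrix n n ℂ) with hU
  have h1 : Uᴴ * U = 1 := by
    rw [← Matrix.star_eq_conjTranspose]; simp [hU]
  have h2 : U * Uᴴ = 1 := by
    rw [← Matrix.star_eq_conjTranspose]; simp [hU]
  have hfc : ∀ g, fc h g = U * Matrix.diagonal (fun i => g (h.eigenvalues i)) * Uᴴ := fun g => rfl
  have e1 : Matrix.diagonal (fun i => (h.eigenvalues i : ℂ)) * (Uᴴ * W)
      = (Uᴴ * W) * Matrix.diagonal (fun i => (μ i : ℂ)) := by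
    have := fc_id h
    rw [hfc] at this
    replace this := this.trans hA
    calc _ = (Uᴴ * U) * Matrix.diagonal (fun i => (h.eigenvalues i : ℂ)) * Uᴴ * W := by
          rw [h1, Matrix.one_mul, Matrix.mul_assoc]
      _ = Uᴴ * (U * Matrix.diagonal (fun i => (h.eigenvalues i : ℂ)) * Uᴴ) * W := by
          simp only [Matrix.mul_assoc]
      _ = Uᴴ * W * Matrix.diagonal (fun i => (μ i : ℂ)) * (Wᴴ * W) := by
          rw [this]; simp only [Matrix.mul_assoc]
      _ = _ := by rw [hW', Matrix.mul_one]
  have e2 : Matrix.diagonal (fun i => f (h.eigenvalues i)) * (Uᴴ * W)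
      = (Uᴴ * W) * Matrix.diagonal (fun i => f (μ i)) := by
    ext i j
    have := congrFun (congrFun e1 i) j
    rw [Matrix.diagonal_mul, Matrix.mul_diagonal] at this ⊢
    by_cases hz : (Uᴴ * W) i j = 0
    · rw [hz]; simp
    · rw [mul_comm] at this
      have := mul_left_cancel₀ hz this
      rw [Complex.ofReal_inj.1 this, mul_comm]
  rw [hfc]
  calc _ = U * Matrix.diagonal (fun i => f (h.eigenvalues i)) * Uᴴ * (W * Wᴴ) := by
        rw [hW, Matrix.mul_one]
    _ = U * (Matrix.diagonal (fun i => f (h.eigenvalues i)) * (Uᴴ * W)) * Wᴴ := by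
        simp only [Matrix.mul_assoc]
    _ = (U * Uᴴ) * W * Matrix.diagonal (fun i => f (μ i)) * Wᴴ := by
        rw [e2]; simp only [Matrix.mul_assoc]
    _ = _ := by rw [h2, Matrix.one_mul]

lemma mpow_eq {A : Matrix n n ℂ} (h : A.PosSemidef) (t : ℝ) :
    mpow A t = fc h.1 (pw t) := by
  rw [mpow, dif_pos h.1, fc]
  congr 3
  funext i
  rw [pw]
  by_cases h0 : h.1.eigenvalues i = 0
  · simp [h0]
  · simp only [h0, if_false]
    have hx := h.eigenvalues_nonneg i
    generalize h.1.eigenvalues i = x at hx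
    lift x to NNReal using hx
    have := CFC.rpow_algebraMap (A := ℂ) (x := x) (y := t)
    exact this.trans (Complex.ofReal_cpow x.2 t)

lemma pw_mul (z w : ℂ) (x : ℝ) : pw z x * pw w x = pw (z + w) x := by
  unfold pw
  split_ifs with h
  · simp
  · rw [Complex.cpow_add _ _ (by exact_mod_cast h)]

lemma pw_star (z : ℂ) {x : ℝ} (hx : 0 ≤ x) : star (pw z x) = pw (star z) x := by
  unfold pw
  split_ifs with h
  · simp
  · have := Complex.cpow_conj (x : ℂ) z (by
      rw [Complex.arg_ofReal_of_nonneg hx]; exact Real.pi_pos.ne)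
    simp at this
    simp [this]

lemma pw_one (x : ℝ) : pw 1 x = x := by
  unfold pw; split_ifs with h <;> simp [h]

lemma fc_pw_mul {A : Matrix n n ℂ} (h : A.IsHermitian) (z w : ℂ) :
    fc h (pw z) * fc h (pw w) = fc h (pw (z + w)) := by
  rw [fc_mul]; exact fc_congr h fun i => pw_mul _ _ _

lemma fc_pw_star {A : Matrix n n ℂ} (h : A.PosSemidef) (z : ℂ) :
    (fc h.1 (pw z))ᴴ = fc h.1 (pw (star z)) := by
  rw [fc_star]; exact fc_congr h.1 fun i => pw_star _ (h.eigenvalues_nonneg i)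

lemma fc_pw_one {A : Matrix n n ℂ} (h : A.IsHermitian) : fc h (pw 1) = A := by
  conv_rhs => rw [← fc_id h]
  exact fc_congr h fun i => pw_one _

lemma fr_eq (X : Matrix n n ℂ) : (Xᴴ * X).trace = (fr X : ℂ) := by
  simp only [Matrix.trace, Matrix.diag, Matrix.mul_apply, fr, Matrix.conjTranspose_apply]
  rw [Finset.sum_comm]
  push_cast
  refine Finset.sum_congr rfl fun i _ => Finset.sum_congr rfl fun j _ => ?_
  exact Complex.conj_mul' _

lemma fr_nonneg (X : Matrix n n ℂ) : 0 ≤ fr X := by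
  unfold fr; positivity

lemma fr_conj (X : Matrix n n ℂ) : fr Xᴴ = fr X := by
  unfold fr; rw [Finset.sum_comm]; simp

lemma trace_cs (A B : Matrix n n ℂ) : ‖(A * B).trace‖ ^ 2 ≤ fr A * fr B := by
  have h1 : ‖(A * B).trace‖ ≤ ∑ q : n × n, ‖A q.1 q.2‖ * ‖B q.2 q.1‖ := by
    simp only [Matrix.trace, Matrix.diag, Matrix.mul_apply, Fintype.sum_prod_type]
    refine (norm_sum_le _ _).trans (Finset.sum_le_sum fun i _ => (norm_sum_le _ _).trans ?_)
    simp
  have h2 := Finset.sum_mul_sq_le_sq_mul_sq (Finset.univ : Finset (n × n))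
    (fun q => ‖A q.1 q.2‖) (fun q => ‖B q.2 q.1‖)
  have h3 : ∑ q : n × n, ‖A q.1 q.2‖ ^ 2 = fr A := by simp [fr, Fintype.sum_prod_type]
  have h4 : ∑ q : n × n, ‖B q.2 q.1‖ ^ 2 = fr B := by
    simp only [fr, Fintype.sum_prod_type]; rw [Finset.sum_comm]
  rw [h3, h4] at h2
  exact (pow_le_pow_left₀ (norm_nonneg _) h1 2).trans h2

lemma fr_contr {C : Matrix n n ℂ} (hC : (Cᴴ * C) * (Cᴴ * C) = Cᴴ * C) (X : Matrix n n ℂ) :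
    fr (C * X) ≤ fr X := by
  have h : fr X = fr (C * X) + fr ((1 - Cᴴ * C) * X) := by
    have e1 := fr_eq X
    have e2 := fr_eq (C * X)
    have e3 := fr_eq ((1 - Cᴴ * C) * X)
    have : Xᴴ * X = (C * X)ᴴ * (C * X) + ((1 - Cᴴ * C) * X)ᴴ * ((1 - Cᴴ * C) * X) := by
      have k : (1 - Cᴴ * C) * (1 - Cᴴ * C) = 1 - Cᴴ * C := by
        rw [Matrix.mul_sub, Matrix.sub_mul, Matrix.sub_mul, hC]; simp
      have l : (1 - Cᴴ * C)ᴴ = 1 - Cᴴ * C := by simp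
      rw [Matrix.conjTranspose_mul, Matrix.conjTranspose_mul, l]
      calc Xᴴ * X = Xᴴ * (Cᴴ * C + (1 - Cᴴ * C)) * X := by simp
        _ = Xᴴ * (Cᴴ * C + (1 - Cᴴ * C) * (1 - Cᴴ * C)) * X := by rw [k]
        _ = _ := by simp only [Matrix.mul_add, Matrix.add_mul, Matrix.mul_assoc]
    rw [this, Matrix.trace_add, e2, e3] at e1
    exact_mod_cast e1.symm
  have := fr_nonneg ((1 - Cᴴ * C) * X)
  linarith

lemma fr_contr_pw {A : Matrix n n ℂ} (h : A.PosSemidef) {z : ℂ} (hz : z.re = 0)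
    (X : Matrix n n ℂ) : fr (fc h.1 (pw z) * X) ≤ fr X := by
  apply fr_contr
  have : star z + z = 0 := by
    apply Complex.ext <;> simp [hz]
  rw [fc_pw_star h, fc_pw_mul, fc_pw_mul, this, add_zero]

lemma fr_pw {A : Matrix n n ℂ} (h : A.PosSemidef) (z : ℂ) :
    (fr (fc h.1 (pw z)) : ℂ) = (fc h.1 (pw (2 * z.re))).trace := by
  rw [← fr_eq, fc_pw_star h, fc_pw_mul]
  congr 4
  apply Complex.ext <;> simp; ring

/-- entire and bounded on the strip -/
def Nice (f : ℂ → ℂ) : Prop :=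
  Differentiable ℂ f ∧ ∃ K : ℝ, ∀ z ∈ Complex.HadamardThreeLines.verticalClosedStrip 0 1, ‖f z‖ ≤ K

lemma Nice.const (c : ℂ) : Nice (fun _ => c) := ⟨by fun_prop, ‖c‖, fun _ _ => le_rfl⟩

lemma Nice.mul {f g : ℂ → ℂ} (hf : Nice f) (hg : Nice g) : Nice (fun z => f z * g z) := by
  obtain ⟨h1, K, hK⟩ := hf
  obtain ⟨h2, L, hL⟩ := hg
  refine ⟨h1.mul h2, K * L, fun z hz => ?_⟩
  rw [norm_mul]
  exact mul_le_mul (hK z hz) (hL z hz) (norm_nonneg _) ((norm_nonneg _).trans (hK z hz))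

lemma Nice.sum {ι : Type*} (s : Finset ι) {f : ι → ℂ → ℂ} (hf : ∀ i, Nice (f i)) :
    Nice (fun z => ∑ i ∈ s, f i z) := by
  refine ⟨Differentiable.fun_sum fun i _ => (hf i).1, ?_⟩
  choose K hK using fun i => (hf i).2
  exact ⟨∑ i ∈ s, K i, fun z hz => (norm_sum_le _ _).trans (Finset.sum_le_sum fun i _ => hK i z hz)⟩

lemma Nice.pw (a b : ℝ) {x : ℝ} (hx : 0 ≤ x) : Nice (fun z => pw (a * z + b) x) := by
  unfold _root_.pw
  by_cases h : x = 0
  · simpa [h] using Nice.const 0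
  have hx' : 0 < x := lt_of_le_of_ne hx (Ne.symm h)
  simp only [h, if_false]
  have hxc : (x : ℂ) ≠ 0 := by exact_mod_cast h
  refine ⟨fun z => ?_, Real.exp (|Real.log x| * (|a| + |b|)), fun z hz => ?_⟩
  · exact DifferentiableAt.const_cpow (by fun_prop) (Or.inl hxc)
  · rw [Complex.norm_cpow_eq_rpow_re_of_pos hx', Real.rpow_def_of_pos hx']
    apply Real.exp_le_exp.2
    have hz' : 0 ≤ z.re ∧ z.re ≤ 1 := hz
    refine (le_abs_self _).trans ?_
    rw [abs_mul]
    gcongr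
    simp
    refine (abs_add_le _ _).trans ?_
    rw [abs_mul, abs_of_nonneg hz'.1]
    gcongr
    nlinarith [abs_nonneg a]

/-- matrices with nice entries -/
def MNice (F : ℂ → Matrix n n ℂ) : Prop := ∀ i j, Nice (fun z => F z i j)

lemma MNice.const (A : Matrix n n ℂ) : MNice (fun _ => A) := fun i j => Nice.const _

lemma MNice.mul {F G : ℂ → Matrix n n ℂ} (hF : MNice F) (hG : MNice G) :
    MNice (fun z => F z * G z) := by
  intro i j
  simp only [Matrix.mul_apply]
  exact Nice.sum _ fun k => (hF i k).mul (hG k j)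

lemma MNice.fc {A : Matrix n n ℂ} (h : A.PosSemidef) (a b : ℝ) :
    MNice (fun z => fc h.1 (pw (a * z + b))) := by
  unfold _root_.fc
  refine ((MNice.const _).mul ?_).mul (MNice.const _)
  intro i j
  by_cases hij : i = j
  · subst hij
    simpa using Nice.pw a b (h.eigenvalues_nonneg i)
  · simpa [Matrix.diagonal_apply_ne _ hij] using Nice.const 0

lemma MNice.trace {F : ℂ → Matrix n n ℂ} (hF : MNice F) : Nice (fun z => (F z).trace) :=
  Nice.sum _ fun i => hF i i

/-- The interpolation argument. -/
lemma interp {A B C : Matrix n n ℂ} (hA : A.PosSemidef) (hB : B.PosSemidef) (hC : C.PosSemidef)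
    (s : ℝ) (hs0 : 0 < s) (hs1 : s < 1)
    (h1 : ∀ z : ℂ, z.re = 1 → fr (fc hB.1 (pw (z / 2)) * fc hC.1 (pw (-z / 2)) *
      fc hA.1 (pw (z / 2))) ≤ 1)
    {M : Matrix n n ℂ} (hM : M.PosSemidef)
    (hMG : M = (fc hB.1 (pw (s / 2)) * fc hC.1 (pw (-s / 2)) * fc hA.1 (pw (s / 2)))ᴴ *
      (fc hB.1 (pw (s / 2)) * fc hC.1 (pw (-s / 2)) * fc hA.1 (pw (s / 2)))) :
    (fc hM.1 (pw (1 / s))).trace ≤ 1 := by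
  set G : ℂ → Matrix n n ℂ := fun z => fc hB.1 (pw (z / 2)) * fc hC.1 (pw (-z / 2)) *
      fc hA.1 (pw (z / 2)) with hG
  have hMG' : M = (G s)ᴴ * G s := hMG
  have hsc : (s : ℂ) ≠ 0 := by exact_mod_cast hs0.ne'
  set T : ℝ := fr (fc hM.1 (pw (1 / (2 * s)))) with hT
  have hTeq : (fc hM.1 (pw (1 / s))).trace = (T : ℂ) := by
    rw [hT, fr_pw hM]
    congr 3
    have : (1 / (2 * (s : ℂ))) = ((1 / (2 * s) : ℝ) : ℂ) := by push_cast; rfl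
    rw [this, Complex.ofReal_re]; push_cast; field_simp
  have hT0 : 0 ≤ T := fr_nonneg _
  have hfrT : ∀ w : ℂ, w.re = 1 / (2 * s) → fr (fc hM.1 (pw w)) = T := by
    intro w hw
    have := fr_pw hM w
    rw [hw] at this
    have e : (2 * ((1 / (2 * s) : ℝ) : ℂ)) = 1 / s := by push_cast; field_simp
    rw [e, hTeq] at this
    exact_mod_cast this
  set f : ℂ → ℂ := fun z => (fc hM.1 (pw ((2 - z) / (2 * s) - 1 / 2)) * (G s)ᴴ * G z).trace with hf
  have hnice : Nice f := by
    apply MNice.trace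
    refine ((?_ : MNice _).mul (MNice.const _)).mul (((?_ : MNice _).mul ?_).mul ?_)
    · convert MNice.fc hM (-1 / (2 * s)) (1 / s - 1 / 2) using 4
      push_cast; field_simp; ring
    · convert MNice.fc hB (1 / 2) 0 using 4
      push_cast; ring
    · convert MNice.fc hC (-1 / 2) 0 using 4
      push_cast; ring
    · convert MNice.fc hA (1 / 2) 0 using 4
      push_cast; ring
  -- value at `s`
  have hfs : f s = T := by
    rw [hf]
    simp only
    rw [Matrix.mul_assoc, ← hMG', ← hTeq]
    conv_lhs => enter [1, 2]; rw [← fc_pw_one hM.1]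
    rw [fc_pw_mul]
    congr 3
    field_simp; ring
  -- left line
  have hleft : ∀ z : ℂ, z.re = 0 → ‖f z‖ ≤ T := by
    intro z hz
    set V := G s * fc hM.1 (pw (-1 / 2)) with hV
    have hst : star (-1 / 2 : ℂ) = -1 / 2 := by
      apply Complex.ext <;> simp
    have hVV : Vᴴ * V = fc hM.1 (pw 0) := by
      rw [hV, Matrix.conjTranspose_mul, fc_pw_star hM, hst]
      calc _ = fc hM.1 (pw (-1 / 2)) * ((G s)ᴴ * G s) * fc hM.1 (pw (-1 / 2)) := by
            simp only [Matrix.mul_assoc]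
        _ = fc hM.1 (pw (-1 / 2)) * fc hM.1 (pw 1) * fc hM.1 (pw (-1 / 2)) := by
            rw [← hMG', fc_pw_one]
        _ = _ := by rw [fc_pw_mul, fc_pw_mul]; congr 2; norm_num
    have hVP : V * fc hM.1 (pw 0) = V := by
      rw [hV, Matrix.mul_assoc, fc_pw_mul, add_zero]
    have hcV : (Vᴴᴴ * Vᴴ) * (Vᴴᴴ * Vᴴ) = Vᴴᴴ * Vᴴ := by
      rw [Matrix.conjTranspose_conjTranspose]
      calc _ = V * (Vᴴ * V) * Vᴴ := by simp only [Matrix.mul_assoc]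
        _ = _ := by rw [hVV, hVP]
    set D := fc hM.1 (pw (1 / (2 * s))) with hD
    have key : f z = (fc hM.1 (pw ((2 - z) / (2 * s) - 1 / (2 * s))) *
        (Vᴴ * (fc hB.1 (pw (z / 2)) * (fc hC.1 (pw (-z / 2)) * (fc hA.1 (pw (z / 2)) * D))))).trace := by
      have e : fc hM.1 (pw ((2 - z) / (2 * s) - 1 / 2)) = D *
          (fc hM.1 (pw ((2 - z) / (2 * s) - 1 / (2 * s))) * fc hM.1 (pw (-1 / 2))) := by
        rw [hD, fc_pw_mul, fc_pw_mul]; congr 2; ring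
      rw [hf]
      simp only
      rw [e, hV, Matrix.conjTranspose_mul (G s) (fc hM.1 (pw (-1 / 2))), fc_pw_star hM, hst]
      rw [Matrix.mul_assoc D, Matrix.mul_assoc D, Matrix.trace_mul_comm D]
      simp only [hG, Matrix.mul_assoc]
    have hcs := trace_cs (fc hM.1 (pw ((2 - z) / (2 * s) - 1 / (2 * s))))
        (Vᴴ * (fc hB.1 (pw (z / 2)) * (fc hC.1 (pw (-z / 2)) * (fc hA.1 (pw (z / 2)) * D))))
    rw [← key] at hcs
    have b1 : fr (Vᴴ * (fc hB.1 (pw (z / 2)) * (fc hC.1 (pw (-z / 2)) *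
        (fc hA.1 (pw (z / 2)) * D)))) ≤ T := by
      refine (fr_contr hcV _).trans ?_
      refine (fr_contr_pw hB (by simp [hz]) _).trans ?_
      refine (fr_contr_pw hC (by simp [hz]) _).trans ?_
      exact (fr_contr_pw hA (by simp [hz]) _)
    rw [hfrT _ (by
      have : (2 - z) / (2 * s) - 1 / (2 * s) = (1 - z) / ((2 * s : ℝ) : ℂ) := by push_cast; ring
      rw [this, Complex.div_ofReal_re]; simp [hz])] at hcs
    refine (sq_le_sq₀ (norm_nonneg _) hT0).1 ?_
    nlinarith
  have hright : ∀ z : ℂ, z.re = 1 → ‖f z‖ ≤ Real.sqrt T := by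
    intro z hz
    have hcs := trace_cs (fc hM.1 (pw ((2 - z) / (2 * s) - 1 / 2)) * (G s)ᴴ) (G z)
    have e : fr (fc hM.1 (pw ((2 - z) / (2 * s) - 1 / 2)) * (G s)ᴴ) = T := by
      rw [← fr_conj]
      have := fr_eq ((fc hM.1 (pw ((2 - z) / (2 * s) - 1 / 2)) * (G s)ᴴ)ᴴ)
      have hc : (fc hM.1 (pw ((2 - z) / (2 * s) - 1 / 2)) * (G s)ᴴ)ᴴ =
          G s * fc hM.1 (pw (star ((2 - z) / (2 * s) - 1 / 2))) := by
        rw [Matrix.conjTranspose_mul _ (G s)ᴴ, Matrix.conjTranspose_conjTranspose, fc_pw_star hM]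
      rw [Matrix.conjTranspose_conjTranspose, hc] at this
      have h2 : fc hM.1 (pw ((2 - z) / (2 * s) - 1 / 2)) * (G s)ᴴ *
          (G s * fc hM.1 (pw (star ((2 - z) / (2 * s) - 1 / 2)))) =
          fc hM.1 (pw (1 / s)) := by
        calc _ = fc hM.1 (pw ((2 - z) / (2 * s) - 1 / 2)) * ((G s)ᴴ * G s) *
              fc hM.1 (pw (star ((2 - z) / (2 * s) - 1 / 2))) := by simp only [Matrix.mul_assoc]
          _ = fc hM.1 (pw ((2 - z) / (2 * s) - 1 / 2)) * fc hM.1 (pw 1) *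
              fc hM.1 (pw (star ((2 - z) / (2 * s) - 1 / 2))) := by rw [← hMG', fc_pw_one]
          _ = _ := by
            rw [fc_pw_mul, fc_pw_mul]; congr 2
            have hzz : z + star z = 2 := by
              apply Complex.ext <;> simp [hz]; norm_num
            have : star z = 2 - z := by linear_combination hzz
            have h3 : star ((2 - z) / (2 * s) - 1 / 2) = (2 - star z) / (2 * s) - 1 / 2 := by
              simp
            rw [h3, this]; field_simp; ring
      rw [h2, hTeq] at this
      rw [hc]
      exact_mod_cast this.symm
    rw [e] at hcs
    apply Real.le_sqrt_of_sq_le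
    have := h1 z hz
    refine hcs.trans ?_
    nlinarith
  have hfin := Complex.HadamardThreeLines.norm_le_interp_of_mem_verticalClosedStrip₀₁'
    (f := f) (z := (s : ℂ)) (a := T) (b := Real.sqrt T)
    (show (s : ℂ).re ∈ Set.Icc (0 : ℝ) 1 from ⟨hs0.le, hs1.le⟩)
    hnice.1.diffContOnCl
    (by
      obtain ⟨K, hK⟩ := hnice.2
      refine ⟨K, ?_⟩
      rintro _ ⟨z, hz, rfl⟩
      exact hK z hz)
    (fun z hz => hleft z hz) (fun z hz => hright z hz)
  rw [hfs, Complex.norm_real, Real.norm_of_nonneg hT0, Complex.ofReal_re] at hfin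
  rw [hTeq]
  suffices T ≤ 1 by exact_mod_cast this
  by_contra! hlt
  rw [Real.sqrt_eq_rpow, ← Real.rpow_mul hT0, ← Real.rpow_add (by linarith)] at hfin
  have := Real.rpow_lt_rpow_of_exponent_lt hlt (show 1 - s + 1 / 2 * s < 1 by linarith)
  rw [Real.rpow_one] at this
  linarith

end gen

section trip
variable {dA dB dC : ℕ}

/-- reduced matrix on C -/
noncomputable def rC (ρ : Matrix (Fin dA × Fin dB × Fin dC) (Fin dA × Fin dB × Fin dC) ℂ) :
    Matrix (Fin dC) (Fin dC) ℂ :=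
  ∑ m : Fin dA, ∑ l : Fin dB, ρ.submatrix (fun c => (m, l, c)) (fun c => (m, l, c))

lemma psd_sum {ι n : Type*} [Fintype n] (s : Finset ι) (F : ι → Matrix n n ℂ)
    (h : ∀ i, (F i).PosSemidef) : (∑ i ∈ s, F i).PosSemidef :=
  Finset.sum_induction F Matrix.PosSemidef (fun _ _ a b => a.add b) Matrix.PosSemidef.zero
    (fun i _ => h i)

lemma psd_rC {ρ : Matrix (Fin dA × Fin dB × Fin dC) (Fin dA × Fin dB × Fin dC) ℂ}
    (h : ρ.PosSemidef) : (rC ρ).PosSemidef :=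
  psd_sum _ _ fun m => psd_sum _ _ fun l => h.submatrix _

lemma redC_eq (ρ : Matrix (Fin dA × Fin dB × Fin dC) (Fin dA × Fin dB × Fin dC) ℂ) :
    redC ρ = (1 : Matrix (Fin dA) (Fin dA) ℂ) ⊗ₖ ((1 : Matrix (Fin dB) (Fin dB) ℂ) ⊗ₖ rC ρ) := by
  ext x y
  simp [redC, rC, Matrix.kroneckerMap_apply, Matrix.one_apply, Matrix.sum_apply]

lemma psd_redC {ρ : Matrix (Fin dA × Fin dB × Fin dC) (Fin dA × Fin dB × Fin dC) ℂ}
    (h : ρ.PosSemidef) : (redC ρ).PosSemidef := by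
  rw [redC_eq]
  exact Matrix.PosSemidef.one.kronecker (Matrix.PosSemidef.one.kronecker (psd_rC h))

lemma psd_redBC {ρ : Matrix (Fin dA × Fin dB × Fin dC) (Fin dA × Fin dB × Fin dC) ℂ}
    (h : ρ.PosSemidef) : (redBC ρ).PosSemidef := by
  have : redBC ρ = (1 : Matrix (Fin dA) (Fin dA) ℂ) ⊗ₖ
      (∑ m : Fin dA, ρ.submatrix (fun c => (m, c)) (fun c => (m, c))) := by
    ext x y
    simp [redBC, Matrix.kroneckerMap_apply, Matrix.one_apply, Matrix.sum_apply]
  rw [this]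
  exact Matrix.PosSemidef.one.kronecker (psd_sum _ _ fun m => h.submatrix _)

lemma psd_redAC {ρ : Matrix (Fin dA × Fin dB × Fin dC) (Fin dA × Fin dB × Fin dC) ℂ}
    (h : ρ.PosSemidef) : (redAC ρ).PosSemidef := by
  have : redAC ρ = ((1 : Matrix (Fin dB) (Fin dB) ℂ) ⊗ₖ
      (∑ m : Fin dB, ρ.submatrix (fun c : Fin dA × Fin dC => (c.1, m, c.2))
        (fun c => (c.1, m, c.2)))).submatrix
        (fun x : Fin dA × Fin dB × Fin dC => (x.2.1, (x.1, x.2.2)))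
        (fun x => (x.2.1, (x.1, x.2.2))) := by
    ext x y
    simp [redAC, Matrix.kroneckerMap_apply, Matrix.one_apply, Matrix.sum_apply]
  rw [this]
  exact (Matrix.PosSemidef.one.kronecker (psd_sum _ _ fun m => h.submatrix _)).submatrix _

lemma fc_redC {ρ : Matrix (Fin dA × Fin dB × Fin dC) (Fin dA × Fin dB × Fin dC) ℂ}
    (h : ρ.PosSemidef) (f : ℝ → ℂ) :
    fc (psd_redC h).1 f = (1 : Matrix (Fin dA) (Fin dA) ℂ) ⊗ₖ
      ((1 : Matrix (Fin dB) (Fin dB) ℂ) ⊗ₖ fc (psd_rC h).1 f) := by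
  set W := ((psd_rC h).1.eigenvectorUnitary : Matrix (Fin dC) (Fin dC) ℂ) with hW
  have h1 : Wᴴ * W = 1 := by
    rw [← Matrix.star_eq_conjTranspose]; simp [hW]
  have h2 : W * Wᴴ = 1 := by
    rw [← Matrix.star_eq_conjTranspose]; simp [hW]
  have hfc : ∀ g, fc (psd_rC h).1 g =
    W * Matrix.diagonal (fun i => g ((psd_rC h).1.eigenvalues i)) * Wᴴ := fun g => rfl
  have key : ∀ g : ℝ → ℂ, (1 : Matrix (Fin dA) (Fin dA) ℂ) ⊗ₖ
      ((1 : Matrix (Fin dB) (Fin dB) ℂ) ⊗ₖ fc (psd_rC h).1 g) =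
      ((1 : Matrix (Fin dA) (Fin dA) ℂ) ⊗ₖ ((1 : Matrix (Fin dB) (Fin dB) ℂ) ⊗ₖ W)) *
      Matrix.diagonal (fun i : Fin dA × Fin dB × Fin dC => g ((psd_rC h).1.eigenvalues i.2.2)) *
      ((1 : Matrix (Fin dA) (Fin dA) ℂ) ⊗ₖ ((1 : Matrix (Fin dB) (Fin dB) ℂ) ⊗ₖ W))ᴴ := by
    intro g
    have hd : Matrix.diagonal (fun i : Fin dA × Fin dB × Fin dC =>
        g ((psd_rC h).1.eigenvalues i.2.2)) = (1 : Matrix (Fin dA) (Fin dA) ℂ) ⊗ₖ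
        ((1 : Matrix (Fin dB) (Fin dB) ℂ) ⊗ₖ
          Matrix.diagonal (fun i => g ((psd_rC h).1.eigenvalues i))) := by
      rw [← Matrix.diagonal_one, ← Matrix.diagonal_one, Matrix.diagonal_kronecker_diagonal,
        Matrix.diagonal_kronecker_diagonal]
      simp
    rw [hd, hfc, Matrix.conjTranspose_kronecker, Matrix.conjTranspose_kronecker,
      ← Matrix.mul_kronecker_mul, ← Matrix.mul_kronecker_mul, ← Matrix.mul_kronecker_mul,
      ← Matrix.mul_kronecker_mul]
    simp
  rw [key]
  refine fc_unique (psd_redC h).1 f (fun i => (psd_rC h).1.eigenvalues i.2.2) ?_ ?_ ?_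
  · rw [Matrix.conjTranspose_kronecker, Matrix.conjTranspose_kronecker,
      ← Matrix.mul_kronecker_mul, ← Matrix.mul_kronecker_mul, h2]
    simp
  · rw [Matrix.conjTranspose_kronecker, Matrix.conjTranspose_kronecker,
      ← Matrix.mul_kronecker_mul, ← Matrix.mul_kronecker_mul, h1]
    simp
  · rw [← key (fun x => (x : ℂ)), fc_id, redC_eq]

lemma trace_red (ρ : Matrix (Fin dA × Fin dB × Fin dC) (Fin dA × Fin dB × Fin dC) ℂ)
    (X Y : Matrix (Fin dC) (Fin dC) ℂ) :
    (redBC ρ * ((1 : Matrix (Fin dA) (Fin dA) ℂ) ⊗ₖ ((1 : Matrix (Fin dB) (Fin dB) ℂ) ⊗ₖ X)) *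
      (redAC ρ * ((1 : Matrix (Fin dA) (Fin dA) ℂ) ⊗ₖ ((1 : Matrix (Fin dB) (Fin dB) ℂ) ⊗ₖ Y)))).trace
      = (rC ρ * X * (rC ρ * Y)).trace := by
  have e1 : ∀ x y, (redBC ρ * ((1 : Matrix (Fin dA) (Fin dA) ℂ) ⊗ₖ
      ((1 : Matrix (Fin dB) (Fin dB) ℂ) ⊗ₖ X))) x y =
      (if x.1 = y.1 then 1 else 0) *
        ∑ c, (∑ m, ρ (m, x.2) (m, y.2.1, c)) * X c y.2.2 := by
    intro x y
    simp [Matrix.mul_apply, redBC, Fintype.sum_prod_type, Matrix.kroneckerMap_apply,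
      Matrix.one_apply]
  have e2 : ∀ x y, (redAC ρ * ((1 : Matrix (Fin dA) (Fin dA) ℂ) ⊗ₖ
      ((1 : Matrix (Fin dB) (Fin dB) ℂ) ⊗ₖ Y))) x y =
      (if x.2.1 = y.2.1 then 1 else 0) *
        ∑ c, (∑ l, ρ (x.1, l, x.2.2) (y.1, l, c)) * Y c y.2.2 := by
    intro x y
    simp [Matrix.mul_apply, redAC, Fintype.sum_prod_type, Matrix.kroneckerMap_apply,
      Matrix.one_apply]
  have e3 : ∀ c d, (rC ρ * X) c d = ∑ b : Fin dB, ∑ e, (∑ m, ρ (m, b, c) (m, b, e)) * X e d := by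
    intro c d
    simp only [Matrix.mul_apply, rC, Matrix.sum_apply, Matrix.submatrix_apply]
    rw [Finset.sum_comm]
    refine Finset.sum_congr rfl fun e _ => ?_
    rw [← Finset.sum_mul, Finset.sum_comm]
  have e4 : ∀ c d, (rC ρ * Y) c d = ∑ a : Fin dA, ∑ e, (∑ l, ρ (a, l, c) (a, l, e)) * Y e d := by
    intro c d
    simp only [Matrix.mul_apply, rC, Matrix.sum_apply, Matrix.submatrix_apply]
    rw [Finset.sum_comm]
    refine Finset.sum_congr rfl fun e _ => ?_
    rw [← Finset.sum_mul]
  simp only [Matrix.trace, Matrix.diag]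
  simp only [Matrix.mul_apply (M := redBC ρ * _), Matrix.mul_apply (M := rC ρ * X), e1, e2, e3, e4]
  have e5 : ∀ (a : Fin dA) (b : Fin dB) (c : Fin dC),
      (∑ y : Fin dA × Fin dB × Fin dC, ((if a = y.1 then 1 else 0) *
        ∑ e, (∑ m, ρ (m, b, c) (m, y.2.1, e)) * X e y.2.2) *
        ((if y.2.1 = b then 1 else 0) *
        ∑ e, (∑ l, ρ (y.1, l, y.2.2) (a, l, e)) * Y e c)) =
      ∑ d, (∑ e, (∑ m, ρ (m, b, c) (m, b, e)) * X e d) *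
        ∑ e, (∑ l, ρ (a, l, d) (a, l, e)) * Y e c := by
    intro a b c
    simp only [Fintype.sum_prod_type]
    rw [Finset.sum_eq_single a (fun a' _ h => by simp [h.symm]) (by simp),
      Finset.sum_eq_single b (fun b' _ h => by simp [h]) (by simp)]
    simp
  rw [Fintype.sum_prod_type]
  simp only [Fintype.sum_prod_type (α₁ := Fin dB)]
  simp only [e5]
  simp only [Finset.sum_mul_sum (s := (Finset.univ : Finset (Fin dB))) (t := (Finset.univ : Finset (Fin dA)))]
  -- a b c d  versus c d b a
  calc _ = ∑ b : Fin dB, ∑ a : Fin dA, ∑ c, ∑ d,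
        (∑ e, (∑ m, ρ (m, b, c) (m, b, e)) * X e d) *
        ∑ e, (∑ l, ρ (a, l, d) (a, l, e)) * Y e c := Finset.sum_comm
    _ = ∑ b : Fin dB, ∑ c, ∑ a : Fin dA, ∑ d,
        (∑ e, (∑ m, ρ (m, b, c) (m, b, e)) * X e d) *
        ∑ e, (∑ l, ρ (a, l, d) (a, l, e)) * Y e c :=
          Finset.sum_congr rfl fun _ _ => Finset.sum_comm
    _ = ∑ c, ∑ b : Fin dB, ∑ d, ∑ a : Fin dA,
        (∑ e, (∑ m, ρ (m, b, c) (m, b, e)) * X e d) *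
        ∑ e, (∑ l, ρ (a, l, d) (a, l, e)) * Y e c := by
          rw [Finset.sum_comm]
          exact Finset.sum_congr rfl fun _ _ => Finset.sum_congr rfl fun _ _ => Finset.sum_comm
    _ = _ := Finset.sum_congr rfl fun _ _ => Finset.sum_comm

lemma trace_rC (ρ : Matrix (Fin dA × Fin dB × Fin dC) (Fin dA × Fin dB × Fin dC) ℂ) :
    (rC ρ).trace = ρ.trace := by
  simp only [rC, Matrix.trace_sum]
  simp [Matrix.trace, Fintype.sum_prod_type]

lemma right_line {ρ : Matrix (Fin dA × Fin dB × Fin dC) (Fin dA × Fin dB × Fin dC) ℂ}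
    (h : ρ.PosSemidef) (h1 : ρ.trace = 1) (z : ℂ) (hz : z.re = 1) :
    fr (fc (psd_redBC h).1 (pw (z / 2)) * fc (psd_redC h).1 (pw (-z / 2)) *
      fc (psd_redAC h).1 (pw (z / 2))) ≤ 1 := by
  have hzz : z + star z = 2 := by
    apply Complex.ext <;> simp [hz]; norm_num
  have hsz : star (z / 2) = star z / 2 := by simp
  have hsz' : star (-z / 2) = - star z / 2 := by simp
  have e : star z / 2 + z / 2 = 1 := by linear_combination hzz / 2
  have e' : z / 2 + star z / 2 = 1 := by linear_combination hzz / 2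
  have key := fr_eq (fc (psd_redBC h).1 (pw (z / 2)) * fc (psd_redC h).1 (pw (-z / 2)) *
      fc (psd_redAC h).1 (pw (z / 2)))
  have k2 : ((fc (psd_redBC h).1 (pw (z / 2)) * fc (psd_redC h).1 (pw (-z / 2)) *
      fc (psd_redAC h).1 (pw (z / 2)))ᴴ * (fc (psd_redBC h).1 (pw (z / 2)) *
      fc (psd_redC h).1 (pw (-z / 2)) * fc (psd_redAC h).1 (pw (z / 2)))).trace = 1 := by
    rw [Matrix.conjTranspose_mul, Matrix.conjTranspose_mul, fc_pw_star (psd_redBC h),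
      fc_pw_star (psd_redC h), fc_pw_star (psd_redAC h), hsz, hsz']
    calc _ = (fc (psd_redAC h).1 (pw (star z / 2)) * (fc (psd_redC h).1 (pw (-star z / 2)) *
          ((fc (psd_redBC h).1 (pw (star z / 2)) * fc (psd_redBC h).1 (pw (z / 2))) *
          (fc (psd_redC h).1 (pw (-z / 2)) * fc (psd_redAC h).1 (pw (z / 2)))))).trace := by
            simp only [Matrix.mul_assoc]
      _ = (fc (psd_redAC h).1 (pw (star z / 2)) * (fc (psd_redC h).1 (pw (-star z / 2)) *
          (redBC ρ *
          (fc (psd_redC h).1 (pw (-z / 2)) * fc (psd_redAC h).1 (pw (z / 2)))))).trace := by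
            rw [fc_pw_mul, e, fc_pw_one]
      _ = ((redBC ρ * fc (psd_redC h).1 (pw (-z / 2))) * ((fc (psd_redAC h).1 (pw (z / 2)) *
          fc (psd_redAC h).1 (pw (star z / 2))) * fc (psd_redC h).1 (pw (-star z / 2)))).trace := by
            rw [← Matrix.mul_assoc, Matrix.trace_mul_comm]
            simp only [Matrix.mul_assoc]
      _ = (rC ρ * fc (psd_rC h).1 (pw (-z / 2)) * (rC ρ * fc (psd_rC h).1 (pw (-star z / 2)))).trace := by
            rw [fc_pw_mul, e', fc_pw_one, fc_redC h, fc_redC h, trace_red]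
      _ = (fc (psd_rC h).1 (pw 1) * fc (psd_rC h).1 (pw (-z / 2)) *
            (fc (psd_rC h).1 (pw 1) * fc (psd_rC h).1 (pw (-star z / 2)))).trace := by
            rw [fc_pw_one]
      _ = (fc (psd_rC h).1 (pw 1)).trace := by
            rw [fc_pw_mul, fc_pw_mul, fc_pw_mul]; congr 3; linear_combination -hzz / 2
      _ = 1 := by rw [fc_pw_one, trace_rC, h1]
  rw [k2] at key
  have : (1 : ℝ) = fr (fc (psd_redBC h).1 (pw (z / 2)) * fc (psd_redC h).1 (pw (-z / 2)) *
      fc (psd_redAC h).1 (pw (z / 2))) := by exact_mod_cast key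
  exact this.ge

end trip

theorem stmt_5 {dA dB dC : ℕ}
    (ρ : Matrix (Fin dA × Fin dB × Fin dC) (Fin dA × Fin dB × Fin dC) ℂ)
    (hρ : ρ.PosSemidef) (hρ1 : ρ.trace = 1)
    (α : ℝ) (hα : α ∈ Set.Ioo (0:ℝ) 1) :
    (mpow (mpow (redAC ρ) ((1 - α)/2) * mpow (redC ρ) ((α - 1)/2) *
        mpow (redBC ρ) (1 - α) * mpow (redC ρ) ((α - 1)/2) * mpow (redAC ρ) ((1 - α)/2)) (1/(1 - α))).trace ≤ 1 := by
  have hs0 : 0 < 1 - α := by linarith [hα.2]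
  have hs1 : 1 - α < 1 := by linarith [hα.1]
  set s := 1 - α with hs
  have hs' : α - 1 = -s := by rw [hs]; ring
  rw [hs']
  set M := mpow (redAC ρ) (s / 2) * mpow (redC ρ) (-s / 2) *
        mpow (redBC ρ) s * mpow (redC ρ) (-s / 2) * mpow (redAC ρ) (s / 2) with hM
  have hMG : M = (fc (psd_redBC hρ).1 (pw (s / 2)) * fc (psd_redC hρ).1 (pw (-s / 2)) *
      fc (psd_redAC hρ).1 (pw (s / 2)))ᴴ * (fc (psd_redBC hρ).1 (pw (s / 2)) *
      fc (psd_redC hρ).1 (pw (-s / 2)) * fc (psd_redAC hρ).1 (pw (s / 2))) := by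
    have a1 : star ((s : ℂ) / 2) = s / 2 := by simp
    have a2 : star (-(s : ℂ) / 2) = -s / 2 := by simp
    rw [Matrix.conjTranspose_mul, Matrix.conjTranspose_mul, fc_pw_star (psd_redBC hρ),
      fc_pw_star (psd_redC hρ), fc_pw_star (psd_redAC hρ), a1, a2, hM,
      mpow_eq (psd_redAC hρ), mpow_eq (psd_redC hρ), mpow_eq (psd_redBC hρ)]
    have a3 : fc (psd_redBC hρ).1 (pw s) =
        fc (psd_redBC hρ).1 (pw (s / 2)) * fc (psd_redBC hρ).1 (pw (s / 2)) := by
      rw [fc_pw_mul]; congr 2; ring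
    rw [a3]
    push_cast
    simp only [Matrix.mul_assoc]
  have hMp : M.PosSemidef := by
    rw [hMG]; exact Matrix.posSemidef_conjTranspose_mul_self _
  rw [mpow_eq hMp]
  have := interp (psd_redAC hρ) (psd_redBC hρ) (psd_redC hρ) s hs0 hs1
    (fun z hz => right_line hρ hρ1 z hz) hMp hMG
  push_cast
  exact this
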